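/- (Lemma A.1, variance of the multi-increment.) Let Q be a probability measure on a measurable space Z, let G : Z → ℝ be measurable with 0 < C̲ ≤ G(z) ≤ C̄ for all z, set Z_G = ∫ G dQ and define the tilted probability measure Π(dz) = (G(z)/Z_G) Q(dz). Let φ : Z → ℝ be bounded and measurable, and suppose there are constants C₁, C₂ ≥ 0 such that (i) |E_Q[f·φ]| ≤ C₁ for every measurable f : Z → ℝ with |f(z)| ≤ 1 for all z, and (ii) Var_Q[φ] ≤ C₂². Then there exists a constant C < ∞, depending only on C̲ and C̄ (and not on φ, C₁, C₂), such that Var_Π[φ] ≤ C · max{C₁², C₂², C₁C₂}. -/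

import Mathlib

open MeasureTheory ProbabilityTheory

universe u

/-!
The mean of `X` minimises `c ↦ E[(X - c)²]`. Hence if `μ ≤ c • ν`, the variance under `μ` is at
most the second moment under `μ` around the *`ν`-mean*, which is at most `c` times the variance
under `ν`. The tilted measure satisfies `Π ≤ (C̄ / C̲) • Q` because `G ≤ C̄` and `Z_G ≥ C̲`.
-/

section

open scoped ENNReal NNReal

variable {Ω : Type*} [MeasurableSpace Ω] {μ ν : Measure Ω} {X g : Ω → ℝ} {a b : ℝ}

theorem variance_le_integral_sub_const_sq [IsProbabilityMeasure μ]
    (hX : AEStronglyMeasurable X μ) (c : ℝ) :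
    variance X μ ≤ ∫ ω, (X ω - c) ^ 2 ∂μ := by
  rw [← variance_sub_const hX c]
  exact variance_le_expectation_sq (hX.sub aestronglyMeasurable_const)

theorem variance_le_mul_variance_of_le_smul [IsProbabilityMeasure μ] [IsFiniteMeasure ν]
    {c : ℝ≥0} (hμν : μ ≤ c • ν) (hX : MemLp X 2 ν) :
    variance X μ ≤ c * variance X ν := by
  have hX_meas : AEStronglyMeasurable X μ :=
    hX.aestronglyMeasurable.mono_ac (Measure.absolutelyContinuous_of_le_smul (c := c) hμν)
  have h_int : Integrable (fun ω ↦ (X ω - ∫ ω', X ω' ∂ν) ^ 2) (c • ν) :=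
    (hX.sub (memLp_const _)).integrable_sq.smul_measure_nnreal
  calc variance X μ
      ≤ ∫ ω, (X ω - ∫ ω', X ω' ∂ν) ^ 2 ∂μ := variance_le_integral_sub_const_sq hX_meas _
    _ ≤ ∫ ω, (X ω - ∫ ω', X ω' ∂ν) ^ 2 ∂(c • ν) :=
        integral_mono_measure hμν (.of_forall fun _ ↦ sq_nonneg _) h_int
    _ = c * variance X ν := by
        rw [integral_smul_nnreal_measure, variance_eq_integral hX.aemeasurable, NNReal.smul_def,
          smul_eq_mul]

theorem withDensity_le_smul_of_ae_le {f : Ω → ℝ≥0∞} {c : ℝ≥0∞} (hf : ∀ᵐ ω ∂μ, f ω ≤ c) :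
    μ.withDensity f ≤ c • μ :=
  (withDensity_mono hf).trans_eq (withDensity_const c)

theorem isProbabilityMeasure_withDensity_div_integral (hg_nonneg : 0 ≤ᵐ[μ] g)
    (hg_pos : 0 < ∫ ω, g ω ∂μ) :
    IsProbabilityMeasure (μ.withDensity fun ω ↦ ENNReal.ofReal (g ω / ∫ ω', g ω' ∂μ)) := by
  have hg_int : Integrable g μ := .of_integral_ne_zero hg_pos.ne'
  have h_nonneg : 0 ≤ᵐ[μ] fun ω ↦ g ω / ∫ ω', g ω' ∂μ :=
    hg_nonneg.mono fun _ hω ↦ div_nonneg hω hg_pos.le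
  constructor
  rw [withDensity_apply _ .univ, Measure.restrict_univ,
    ← ofReal_integral_eq_lintegral_ofReal (hg_int.div_const _) h_nonneg, integral_div,
    div_self hg_pos.ne', ENNReal.ofReal_one]

theorem variance_withDensity_div_integral_le [IsFiniteMeasure μ] (hg_nonneg : 0 ≤ᵐ[μ] g)
    (hg_le : ∀ᵐ ω ∂μ, g ω ≤ b) (hg_pos : 0 < ∫ ω, g ω ∂μ) (hX : MemLp X 2 μ) :
    variance X (μ.withDensity fun ω ↦ ENNReal.ofReal (g ω / ∫ ω', g ω' ∂μ))
      ≤ b / (∫ ω, g ω ∂μ) * variance X μ := by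
  have : NeZero μ := ⟨by rintro rfl; simp at hg_pos⟩
  obtain ⟨ω, hω_nonneg, hω_le⟩ := (hg_nonneg.and hg_le).exists
  have hb : 0 ≤ b := hω_nonneg.trans hω_le
  have := isProbabilityMeasure_withDensity_div_integral hg_nonneg hg_pos
  have h_dom : μ.withDensity (fun ω ↦ ENNReal.ofReal (g ω / ∫ ω', g ω' ∂μ))
      ≤ (b / ∫ ω, g ω ∂μ).toNNReal • μ :=
    withDensity_le_smul_of_ae_le <| hg_le.mono fun _ hω ↦
      ENNReal.ofReal_le_ofReal (div_le_div_of_nonneg_right hω hg_pos.le)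
  simpa only [Real.coe_toNNReal _ (div_nonneg hb hg_pos.le)] using
    variance_le_mul_variance_of_le_smul h_dom hX

theorem variance_of_multi_increment_general [IsProbabilityMeasure μ] (ha : 0 < a)
    (hg_meas : AEStronglyMeasurable g μ) (hg : ∀ᵐ ω ∂μ, g ω ∈ Set.Icc a b) (hX : MemLp X 2 μ) :
    variance X (μ.withDensity fun ω ↦ ENNReal.ofReal (g ω / ∫ ω', g ω' ∂μ))
      ≤ b / a * variance X μ := by
  have hab : a ≤ b := let ⟨_, hω⟩ := hg.exists; hω.1.trans hω.2
  have hg_int : Integrable g μ := .of_mem_Icc a b hg_meas.aemeasurable hg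
  have ha_le : a ≤ ∫ ω, g ω ∂μ := by
    simpa using integral_mono_ae (integrable_const a) hg_int (hg.mono fun _ hω ↦ hω.1)
  calc variance X (μ.withDensity fun ω ↦ ENNReal.ofReal (g ω / ∫ ω', g ω' ∂μ))
      ≤ b / (∫ ω, g ω ∂μ) * variance X μ :=
        variance_withDensity_div_integral_le (hg.mono fun _ hω ↦ ha.le.trans hω.1)
          (hg.mono fun _ hω ↦ hω.2) (ha.trans_le ha_le) hX
    _ ≤ b / a * variance X μ := by
        gcongr
        · exact variance_nonneg X μ
        · exact ha.le.trans hab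

end

/-- Lemma A.1, variance of the multi-increment: there is a constant `C`
depending only on `C̲, C̄` such that for any bounded measurable `φ` satisfying
`|E_Q[f·φ]| ≤ C₁` for all measurable `|f| ≤ 1` and `Var_Q[φ] ≤ C₂²`, the variance under
the tilted measure satisfies `Var_Π[φ] ≤ C max{C₁², C₂², C₁C₂}`. -/
theorem variance_of_multi_increment (Cl Cu : ℝ) (hCl : 0 < Cl) (hClCu : Cl ≤ Cu) :
    ∃ C : ℝ, ∀ (Z : Type u) (_ : MeasurableSpace Z)
      (Q : Measure Z) (_ : IsProbabilityMeasure Q)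
      (G : Z → ℝ), Measurable G → (∀ z, Cl ≤ G z ∧ G z ≤ Cu) →
      ∀ ZG : ℝ, ZG = ∫ z, G z ∂Q →
      ∀ PiM : Measure Z, PiM = Q.withDensity (fun z => ENNReal.ofReal (G z / ZG)) →
      ∀ φ : Z → ℝ, Measurable φ → (∃ M : ℝ, ∀ z, |φ z| ≤ M) →
      ∀ C₁ C₂ : ℝ, 0 ≤ C₁ → 0 ≤ C₂ →
      (∀ f : Z → ℝ, Measurable f → (∀ z, |f z| ≤ 1) → |∫ z, f z * φ z ∂Q| ≤ C₁) →
      variance φ Q ≤ C₂ ^ 2 →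
      variance φ PiM ≤ C * max (max (C₁ ^ 2) (C₂ ^ 2)) (C₁ * C₂) := by
  refine ⟨Cu / Cl, ?_⟩
  rintro Z _ Q _ G hG hGb _ rfl _ rfl φ hφ ⟨M, hM⟩ C₁ C₂ - - - hvar
  exact (variance_of_multi_increment_general hCl hG.aestronglyMeasurable (ae_of_all _ hGb)
    (.of_bound hφ.aestronglyMeasurable M (ae_of_all _ hM))).trans <|
      mul_le_mul_of_nonneg_left (hvar.trans (le_max_of_le_left (le_max_right _ _)))
        (div_nonneg (hCl.le.trans hClCu) hCl.le)
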